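/- Let G be a finite group with trivial Frattini subgroup. Then there exists a chief factor V of G and a nontrivial normal subgroup U of G such that I_G(V) = R_G(V) × U. -/

import Mathlib

/-!
Definitions supporting the formalization of
"An upper bound on the Chebotarev invariant of a finite group" (Lucchini–Tracey).
-/

open scoped BigOperators

namespace ChebotarevPaper

/-- A `k`-tuple of elements of `G` invariably generates `G` if, replacing each entry by an
arbitrary conjugate, the resulting elements always generate `G`. -/
def InvGen (G : Type*) [Group G] {k : ℕ} (f : Fin k → G) : Prop :=
  ∀ c : Fin k → G, Subgroup.closure (Set.range fun i => c i * f i * (c i)⁻¹) = ⊤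

/-- The probability that `k` independent uniformly random elements of `G` invariably
generate `G`. -/
noncomputable def probInvGen (G : Type*) [Group G] (k : ℕ) : ℝ :=
  Nat.card {f : Fin k → G // InvGen G f} / (Nat.card G : ℝ) ^ k

/-- The Chebotarev invariant `C(G)`:  `C(G) = Σ_{k ≥ 0} (1 − P_I(G,k))`, where `P_I(G,k)`
is the probability that `k` independent uniformly random elements of `G` invariably
generate `G`. -/
noncomputable def cheb (G : Type*) [Group G] : ℝ :=
  ∑' k : ℕ, (1 - probInvGen G k)

/-- The probability that `k` independent uniformly random elements of `G` generate `G`. -/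
noncomputable def probGen (G : Type*) [Group G] (k : ℕ) : ℝ :=
  Nat.card {f : Fin k → G // Subgroup.closure (Set.range f) = ⊤} / (Nat.card G : ℝ) ^ k

/-- The expected number of uniformly random elements of `G` needed to generate `G`. -/
noncomputable def expectedGen (G : Type*) [Group G] : ℝ :=
  ∑' k : ℕ, (1 - probGen G k)

/-- `d(G)`: the minimal number of generators of `G`. -/
noncomputable def minGen (G : Type*) [Group G] : ℕ :=
  sInf {n | ∃ f : Fin n → G, Subgroup.closure (Set.range f) = ⊤}

/-- `σ` has the defining property of the constant `σ = 2.118456563…` of Pomerance: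
for every finite group `X`, the expected number of uniformly random elements needed to
generate `X` is at most `d(X) + σ`. -/
def IsPomeranceConst (σ : ℝ) : Prop :=
  ∀ (X : Type) [Group X] [Finite X], expectedGen X ≤ minGen X + σ

variable (G : Type*) [Group G]

/-- `(X, Y)` is a chief factor of `G`:  both are normal in `G`, `Y < X`, and no normal
subgroup of `G` lies strictly between them (i.e. `X/Y` is a minimal normal subgroup of
`G/Y`). -/
def IsChiefFactorPair (X Y : Subgroup G) : Prop :=
  X.Normal ∧ Y.Normal ∧ Y < X ∧
    ∀ N : Subgroup G, N.Normal → Y ≤ N → N ≤ X → N = Y ∨ N = X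

/-- The chief factor `X/Y` is complemented: there is `U ≤ G` with `UX = G` and
`U ⊓ X = Y`. -/
def IsComplementedFactor (X Y : Subgroup G) : Prop :=
  ∃ U : Subgroup G, U ⊔ X = ⊤ ∧ U ⊓ X = Y

/-- The chief factor `X/Y` is a Frattini chief factor, i.e. `X/Y ≤ Frat(G/Y)`;
equivalently (and this is how we state it), `X/Y` is abelian and has no complement
in `G`. -/
def IsFrattiniFactor (X Y : Subgroup G) : Prop :=
  (∀ a b : G, a ∈ X → b ∈ X → a * b * a⁻¹ * b⁻¹ ∈ Y) ∧ ¬ IsComplementedFactor G X Y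

/-- The chief factor `X/Y` is central in `G`, i.e. `X/Y ≤ Z(G/Y)`. -/
def IsCentralFactor (X Y : Subgroup G) : Prop :=
  ∀ g x : G, x ∈ X → g * x * g⁻¹ * x⁻¹ ∈ Y

/-- The `G`-group `V` (a group with an action `a : G →* MulAut V` of `G` by automorphisms)
is `G`-isomorphic to the chief factor `X/Y` (on which `G` acts by conjugation): there is a
surjective homomorphism `X →* V` with kernel `Y` transforming conjugation by `g ∈ G` into
the action of `g` on `V`. -/
def RepresentsFactor {V : Type*} [Group V] (a : G →* MulAut V) (X Y : Subgroup G) : Prop :=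
  ∃ f : X →* V, Function.Surjective f ∧ (∀ x : X, f x = 1 ↔ (x : G) ∈ Y) ∧
    ∀ (g : G) (x y : X), (y : G) = g * (x : G) * g⁻¹ → f y = a g (f x)

/-- Two `G`-groups `(V₁, a₁)`, `(V₂, a₂)` are `G`-equivalent: there are isomorphisms
`φ : V₁ ≃* V₂` and `Φ : V₁ ⋊ G ≃* V₂ ⋊ G` making the natural diagram of the two
extensions `1 → Vᵢ → Vᵢ ⋊ G → G → 1` commute. -/
def GEquiv {V₁ V₂ : Type*} [Group V₁] [Group V₂]
    (a₁ : G →* MulAut V₁) (a₂ : G →* MulAut V₂) : Prop :=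
  ∃ (φ : V₁ ≃* V₂) (Φ : (V₁ ⋊[a₁] G) ≃* (V₂ ⋊[a₂] G)),
    (∀ v : V₁, Φ (SemidirectProduct.inl v) = SemidirectProduct.inl (φ v)) ∧
    ∀ x, (Φ x).right = x.right

/-- `G`-isomorphism of `G`-groups. -/
def GIso {V₁ V₂ : Type*} [Group V₁] [Group V₂]
    (a₁ : G →* MulAut V₁) (a₂ : G →* MulAut V₂) : Prop :=
  ∃ φ : V₁ ≃* V₂, ∀ (g : G) (v : V₁), φ (a₁ g v) = a₂ g (φ v)

/-- `N` is a minimal normal subgroup of `G`. -/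
def IsMinimalNormal (N : Subgroup G) : Prop :=
  N.Normal ∧ N ≠ ⊥ ∧ ∀ M : Subgroup G, M.Normal → M ≠ ⊥ → M ≤ N → M = N

/-- The socle of `G`: the subgroup generated by all minimal normal subgroups of `G`. -/
def socle : Subgroup G := sSup {N : Subgroup G | IsMinimalNormal G N}

instance socle_normal : (socle G).Normal := by
  constructor
  intro n hn g
  have h : socle G ≤ (socle G).comap (MulAut.conj g).toMonoidHom := by
    rw [socle]
    apply sSup_le
    intro N hN x hx
    have h1 : (MulAut.conj g).toMonoidHom x ∈ N := by
      simpa [MulAut.conj_apply] using hN.1.conj_mem x hx g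
    exact Subgroup.mem_comap.2 (le_sSup hN h1)
  have h2 := h hn
  simpa [MulAut.conj_apply] using h2

/-- The action of `G` (by conjugation, through `f : G →* Q`) on the socle of `Q`. -/
def socAct {Q : Type*} [Group Q] (f : G →* Q) : G →* MulAut (socle Q) :=
  MulAut.conjNormal.comp f

/-- The diagonal action of `G` on `V × V` induced by an action on `V`. -/
def prodAct {V : Type*} [Group V] (a : G →* MulAut V) : G →* MulAut (V × V) where
  toFun g := MulEquiv.prodCongr (a g) (a g)
  map_one' := by
    ext x <;> simp [MulEquiv.prodCongr, MulAut.one_apply]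
  map_mul' g h := by
    ext x <;> simp [MulEquiv.prodCongr, MulAut.mul_apply]

/-- The diagonal action of `H` on `V^u` induced by an action on `V`. -/
def diagAct (H : Type*) [Group H] {V : Type*} [Group V] (b : H →* MulAut V) (u : ℕ) :
    H →* MulAut (Fin u → V) where
  toFun g := MulEquiv.piCongrRight fun _ => b g
  map_one' := by
    ext x i; simp
  map_mul' g h := by
    ext x i; simp [MulAut.mul_apply]

variable {G}

/-- The elements `gs 0, …, gs (k-1)` of `G` satisfy the `V`-property in `G`: they all lie
in the union of the `G`-conjugates of some maximal subgroup `M` of `G` such that the socle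
of `G/core_G(M)` is `G`-equivalent to `V` or to `V × V`. -/
def SatisfyVProperty {V : Type*} [Group V] (a : G →* MulAut V) {k : ℕ}
    (gs : Fin k → G) : Prop :=
  ∃ M : Subgroup G, IsCoatom M ∧
    (GEquiv G (socAct G (QuotientGroup.mk' M.normalCore)) a ∨
      GEquiv G (socAct G (QuotientGroup.mk' M.normalCore)) (prodAct G a)) ∧
    ∀ i, ∃ x : G, x * gs i * x⁻¹ ∈ M

/-- `P*_{G,V}(k)`: the probability that `k` independent uniformly random elements of `G`
satisfy the `V`-property in `G`. -/
noncomputable def pStar {V : Type*} [Group V] (a : G →* MulAut V) (k : ℕ) : ℝ :=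
  Nat.card {gs : Fin k → G // SatisfyVProperty a gs} / (Nat.card G : ℝ) ^ k

/-- The collection of normal subgroups `N` of `G` such that `G/N` is isomorphic to the
monolithic primitive group `L_V` associated to `V` (that is, `V ⋊ (G/C_G(V))` if `V` is
abelian and `G/C_G(V)` otherwise; here `C_G(V)` is the kernel of the action of `G` on
`V`) and the socle of `G/N` is `G`-equivalent to `V`. -/
def crownNormals {V : Type*} [Group V] (a : G →* MulAut V) : Set (Subgroup G) :=
  {N | ∃ _ : N.Normal,
    ((∀ x y : V, x * y = y * x) →
      Nonempty ((G ⧸ N) ≃* (V ⋊[QuotientGroup.kerLift a] (G ⧸ a.ker)))) ∧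
    (¬ (∀ x y : V, x * y = y * x) → Nonempty ((G ⧸ N) ≃* (G ⧸ a.ker))) ∧
    GEquiv G (socAct G (QuotientGroup.mk' N)) a}

/-- `R_G(V)`: the intersection of all normal subgroups `N` of `G` with `G/N ≅ L_V` and
`soc(G/N)` `G`-equivalent to `V`. -/
def crownRadical {V : Type*} [Group V] (a : G →* MulAut V) : Subgroup G :=
  sInf (crownNormals a)

instance crownRadical_normal {V : Type*} [Group V] (a : G →* MulAut V) :
    (crownRadical a).Normal := by
  constructor
  intro n hn g
  rw [crownRadical, Subgroup.mem_sInf] at hn ⊢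
  intro p hp
  obtain ⟨hpN, hrest⟩ := hp
  exact hpN.conj_mem n (hn p ⟨hpN, hrest⟩) g

/-- `I_G(V)`: the preimage in `G` of the socle of `G/R_G(V)`; the `V`-crown of `G` is
`I_G(V)/R_G(V)`. -/
def crownSocle {V : Type*} [Group V] (a : G →* MulAut V) : Subgroup G :=
  (socle (G ⧸ crownRadical a)).comap (QuotientGroup.mk' (crownRadical a))

/-- A chief series of `G`: a chain `⊥ = N_0 < N_1 < … < N_len = ⊤` of normal subgroups
of `G` in which each factor `N_{i+1}/N_i` is a chief factor of `G`. -/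
structure ChiefSeries (G : Type*) [Group G] where
  len : ℕ
  ser : Fin (len + 1) → Subgroup G
  bot_eq : ser 0 = ⊥
  top_eq : ser (Fin.last len) = ⊤
  chief : ∀ i : Fin len, IsChiefFactorPair G (ser i.succ) (ser i.castSucc)

/-- `δ_V(G)` (for a `G`-module `V`): the number of complemented factors in the chief
series `S` of `G` which are `G`-isomorphic to `V`. -/
noncomputable def deltaIso {V : Type*} [Group V] (a : G →* MulAut V)
    (S : ChiefSeries G) : ℕ :=
  Nat.card {i : Fin S.len //
    IsComplementedFactor G (S.ser i.succ) (S.ser i.castSucc) ∧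
    RepresentsFactor G a (S.ser i.succ) (S.ser i.castSucc)}

/-- The chief factor `X/Y` of `G` is `G`-equivalent to the `G`-group `(V, a)`. -/
def FactorGEquiv (X Y : Subgroup G) {V : Type*} [Group V] (a : G →* MulAut V) : Prop :=
  ∃ (W : Type) (_ : Group W) (b : G →* MulAut W),
    RepresentsFactor G b X Y ∧ GEquiv G b a

/-- `δ_V(G)` (for a `G`-group `V`): the number of non-Frattini factors in the chief
series `S` of `G` which are `G`-equivalent to `V`. -/
noncomputable def deltaEquiv {V : Type*} [Group V] (a : G →* MulAut V)
    (S : ChiefSeries G) : ℕ :=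
  Nat.card {i : Fin S.len //
    ¬ IsFrattiniFactor G (S.ser i.succ) (S.ser i.castSucc) ∧
    FactorGEquiv (S.ser i.succ) (S.ser i.castSucc) a}

/-- Bundled `G`-group: a group together with an action of `G` by automorphisms. -/
structure GGroup (G : Type) [Group G] : Type 1 where
  carrier : Type
  [grp : Group carrier]
  act : G →* MulAut carrier

attribute [instance] GGroup.grp

/-- The action `b` of `H` on `V` is irreducible: `V` is nontrivial and has no proper
nontrivial (normal) `H`-invariant subgroup. -/
def IsIrreducibleGGroup (H : Type*) [Group H] {V : Type*} [Group V]
    (b : H →* MulAut V) : Prop :=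
  Nontrivial V ∧
    ∀ W : Subgroup V, W.Normal → (∀ (h : H) (v : V), v ∈ W → b h v ∈ W) → W = ⊥ ∨ W = ⊤

/-- The `H`-equivariant endomorphisms of `V` (for `H`-modules `V` this is
`End_H(V)`). -/
def EquivEnd (H : Type*) [Group H] {V : Type*} [Group V] (b : H →* MulAut V) :=
  {f : V →* V // ∀ (h : H) (v : V), f (b h v) = b h (f v)}

/-- `q_V := |End_H(V)|`. -/
noncomputable def endCard (H : Type*) [Group H] {V : Type*} [Group V]
    (b : H →* MulAut V) : ℕ :=
  Nat.card (EquivEnd H b)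

/-- `n_V := dim_{End_H(V)} V`, characterised by `|End_H(V)| ^ n_V = |V|` (for a finite
irreducible `H`-module `V`, `End_H(V)` is a field and `V` a vector space over it). -/
noncomputable def dimEnd (H : Type*) [Group H] {V : Type*} [Group V]
    (b : H →* MulAut V) : ℕ :=
  sInf {n : ℕ | endCard H b ^ n = Nat.card V}

/-- The set of derivations `ζ : H → V` (satisfying `ζ(h₁h₂) = ζ(h₁)^{h₂} · ζ(h₂)`). -/
def DerSet (H : Type*) [Group H] {V : Type*} [Group V] (b : H →* MulAut V) :
    Set (H → V) :=
  {ζ | ∀ h₁ h₂ : H, ζ (h₁ * h₂) = b h₂ (ζ h₁) * ζ h₂}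

/-- The set of inner derivations `h ↦ [h,v] = v^h · v⁻¹`. -/
def IderSet (H : Type*) [Group H] {V : Type*} [Group V] (b : H →* MulAut V) :
    Set (H → V) :=
  {ζ | ∃ v : V, ∀ h : H, ζ h = b h v * v⁻¹}

/-- `m := dim_{End_H(V)} H¹(H,V)` where `H¹(H,V) = Der(H,V)/Ider(H,V)`, characterised by
`|End_H(V)| ^ m · |Ider(H,V)| = |Der(H,V)|`. -/
noncomputable def h1Dim (H : Type*) [Group H] {V : Type*} [Group V]
    (b : H →* MulAut V) : ℕ :=
  sInf {m : ℕ | endCard H b ^ m * Nat.card (IderSet H b) = Nat.card (DerSet H b)}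

/-- The probability that a uniformly random element of `H` fixes a nonzero (i.e.
non-identity) vector of `V`. -/
noncomputable def fixProb (H : Type*) [Group H] {V : Type*} [Group V]
    (b : H →* MulAut V) : ℝ :=
  Nat.card {h : H // ∃ v : V, v ≠ 1 ∧ b h v = v} / (Nat.card H : ℝ)

/-- `A` is a set of representatives for the irreducible `G`-modules which are
`G`-isomorphic to a chief factor of `G` satisfying `P`:  every member of `A` is an
irreducible abelian `G`-group `G`-isomorphic to some chief factor satisfying `P`, and
every chief factor of `G` satisfying `P` is `G`-isomorphic to exactly one member
of `A`. -/
def IsModuleRepSet {G : Type} [Group G] (P : Subgroup G → Subgroup G → Prop)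
    (A : Finset (GGroup G)) : Prop :=
  (∀ V ∈ A, (∀ x y : V.carrier, x * y = y * x) ∧ IsIrreducibleGGroup G V.act ∧
      ∃ X Y : Subgroup G, IsChiefFactorPair G X Y ∧ P X Y ∧ RepresentsFactor G V.act X Y) ∧
  ∀ X Y : Subgroup G, IsChiefFactorPair G X Y → P X Y →
    ∃! V : GGroup G, V ∈ A ∧ RepresentsFactor G V.act X Y

/-- `A` is a set of representatives for the irreducible `G`-groups which are
`G`-equivalent to a chief factor of `G` satisfying `P`. -/
def IsGGroupRepSet {G : Type} [Group G] (P : Subgroup G → Subgroup G → Prop)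
    (A : Finset (GGroup G)) : Prop :=
  (∀ V ∈ A, IsIrreducibleGGroup G V.act ∧
      ∃ X Y : Subgroup G, IsChiefFactorPair G X Y ∧ P X Y ∧ FactorGEquiv X Y V.act) ∧
  ∀ X Y : Subgroup G, IsChiefFactorPair G X Y → P X Y →
    ∃! V : GGroup G, V ∈ A ∧ FactorGEquiv X Y V.act

/-!
Write `I_N = N C_G(N)` for a minimal normal subgroup `N` of `G`, and choose `N` with `I_N` minimal.
Every normal subgroup `M` with `G/M ≅ L_N` and `soc(G/M)` equivalent to `N` makes `I_N/M` a chief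
factor of `G` containing its own centralizer, because `|G : M| = |N| |G : I_N|`. When `Frat(G) = 1`
one has `C_G(soc G) ≤ soc G`, so a chief factor `I/M` containing its own centralizer with
`soc G ≤ M` would yield a minimal normal subgroup `K` with `I_K < I`. Hence no such factor `I_N/M`
has `soc G ≤ M`, and this forces `I_N = (soc G) R_G(N)`. A complement `U` of `R_G(N) ∩ soc G` in
`soc G`, normal in `G`, then satisfies `I_N = R_G(N) × U`.
-/

theorem sup_inf_assoc_of_le_of_normal {A C : Subgroup G} (B : Subgroup G) [A.Normal]
    (h : A ≤ C) : (A ⊔ B) ⊓ C = A ⊔ B ⊓ C := by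
  refine le_antisymm ?_ (le_inf (sup_le_sup_left inf_le_left A) (sup_le h inf_le_right))
  rintro x ⟨hx, hxC⟩
  obtain ⟨a, ha, b, hb, rfl⟩ := Subgroup.mem_sup_of_normal_left.1 hx
  exact Subgroup.mul_mem_sup ha ⟨hb, (C.mul_mem_cancel_left (h ha)).1 hxC⟩

theorem le_centralizer_of_disjoint {A B : Subgroup G} [A.Normal] [B.Normal]
    (h : Disjoint A B) : A ≤ Subgroup.centralizer (B : Set G) :=
  Subgroup.commutator_eq_bot_iff_le_centralizer.1 (Subgroup.commutator_eq_bot_of_disjoint h)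

theorem inf_normal_of_sup_eq_top {A B H : Subgroup G} [B.Normal] (hHA : H ⊔ A = ⊤)
    (hA : A ≤ Subgroup.centralizer (B ⊓ H : Subgroup G)) : (B ⊓ H).Normal := by
  refine Subgroup.normalizer_eq_top_iff.1 (top_le_iff.1 (hHA.symm.le.trans (sup_le ?_ ?_)))
  · refine le_trans (le_inf ?_ Subgroup.le_normalizer)
      Subgroup.inf_normalizer_le_normalizer_inf
    rw [Subgroup.normalizer_eq_top B]
    exact le_top
  · exact hA.trans (Subgroup.centralizer_le_normalizer _)

theorem commutator_sup_le {E A B M : Subgroup G} [M.Normal] (hA : ⁅E, A⁆ ≤ M)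
    (hB : ⁅E, B⁆ ≤ M) : ⁅E, A ⊔ B⁆ ≤ M := by
  have commutator_le_iff (K : Subgroup G) : ⁅E, K⁆ ≤ M ↔ K.map (QuotientGroup.mk' M) ≤
      Subgroup.centralizer (E.map (QuotientGroup.mk' M) : Set (G ⧸ M)) := by
    rw [Subgroup.commutator_comm, ← Subgroup.commutator_eq_bot_iff_le_centralizer,
      ← Subgroup.map_commutator, Subgroup.map_eq_bot_iff, QuotientGroup.ker_mk']
  rw [commutator_le_iff] at hA hB ⊢
  rw [Subgroup.map_sup]
  exact sup_le hA hB

/-! ### Minimal normal subgroups and the socle -/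

theorem exists_isMinimalNormal_le [Finite G] {H : Subgroup G} [hH : H.Normal] (hne : H ≠ ⊥) :
    ∃ N ≤ H, IsMinimalNormal G N := by
  obtain ⟨N, hNH, hN⟩ := (Set.toFinite {K : Subgroup G | K.Normal ∧ K ≠ ⊥}).exists_le_minimal
    (show H ∈ _ from ⟨hH, hne⟩)
  exact ⟨N, hNH, hN.prop.1, hN.prop.2, fun K hK hKne hKN => hN.eq_of_le ⟨hK, hKne⟩ hKN⟩

theorem IsMinimalNormal.le_or_disjoint {N : Subgroup G} (hN : IsMinimalNormal G N)
    (H : Subgroup G) [H.Normal] : N ≤ H ∨ Disjoint N H := by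
  have := hN.1
  refine or_iff_not_imp_right.2 fun hdisj => inf_eq_left.1 ?_
  exact hN.2.2 (N ⊓ H) inferInstance (disjoint_iff.not.1 hdisj) inf_le_left

theorem IsMinimalNormal.le_socle {N : Subgroup G} (hN : IsMinimalNormal G N) : N ≤ socle G :=
  le_sSup hN

theorem socle_le_sup_centralizer (N : Subgroup G) [N.Normal] :
    socle G ≤ N ⊔ Subgroup.centralizer (N : Set G) := by
  refine sSup_le fun K hK => ?_
  have := hK.1
  rcases hK.le_or_disjoint N with hKN | hKN
  · exact le_sup_of_le_left hKN
  · exact le_sup_of_le_right (le_centralizer_of_disjoint hKN)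

theorem exists_normal_disjoint_socle_le_sup [Finite G] (R : Subgroup G) [R.Normal] :
    ∃ U : Subgroup G, U.Normal ∧ U ≤ socle G ∧ Disjoint U R ∧ socle G ≤ U ⊔ R := by
  obtain ⟨U, -, hU⟩ := (Set.toFinite
    {U : Subgroup G | U.Normal ∧ U ≤ socle G ∧ Disjoint U R}).exists_le_maximal
    (show ⊥ ∈ _ from ⟨inferInstance, bot_le, disjoint_bot_left⟩)
  obtain ⟨hUn, hUS, hUR⟩ := hU.prop
  refine ⟨U, hUn, hUS, hUR, sSup_le fun N hN => ?_⟩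
  have := hN.1
  refine (hN.le_or_disjoint (U ⊔ R)).elim id fun hNUR => le_sup_of_le_left ?_
  have hinf : (U ⊔ N) ⊓ (U ⊔ R) = U := by
    rw [sup_inf_assoc_of_le_of_normal N le_sup_left, hNUR.eq_bot, sup_bot_eq]
  have hdisj : Disjoint (U ⊔ N) R := by
    refine disjoint_iff_inf_le.2 (le_trans (le_inf ?_ inf_le_right) hUR.le_bot)
    exact (inf_le_inf_left _ le_sup_right).trans hinf.le
  exact le_sup_right.trans (hU.le_of_ge ⟨inferInstance, sup_le hUS hN.le_socle, hdisj⟩ le_sup_left)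

/-! ### Trivial Frattini subgroup -/

theorem exists_isComplement'_of_disjoint_frattini [Finite G] {A : Subgroup G} [A.Normal]
    [IsMulCommutative A] (hA : Disjoint A (frattini G)) : ∃ H : Subgroup G, A.IsComplement' H := by
  obtain ⟨H, -, hH⟩ := (Set.toFinite {H : Subgroup G | H ⊔ A = ⊤}).exists_le_minimal
    (show ⊤ ∈ _ from top_sup_eq A)
  have hHA : H ⊔ A = ⊤ := hH.prop
  have hnormal : (A ⊓ H).Normal := inf_normal_of_sup_eq_top hHA
    (Subgroup.le_centralizer_iff_isMulCommutative.2 ‹_› |>.trans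
      (Subgroup.centralizer_le inf_le_left))
  -- A maximal subgroup `M` missing `A ⊓ H` would yield the smaller supplement `M ⊓ H` of `A`.
  have hfrat : A ⊓ H ≤ frattini G := le_iInf₂ fun M hM => by
    by_contra hle
    have htop : A ⊓ H ⊔ M = ⊤ := hM.2 _ (right_lt_sup.2 hle)
    have hdedekind : A ⊓ H ⊔ M ⊓ H = H := by
      rw [← sup_inf_assoc_of_le_of_normal M inf_le_right, htop, top_inf_eq]
    have hH_le : H ≤ M ⊓ H ⊔ A :=
      hdedekind.symm.le.trans (sup_le (le_sup_of_le_right inf_le_left) le_sup_left)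
    have hsupp : M ⊓ H ⊔ A = ⊤ := top_le_iff.1 (hHA.symm.le.trans (sup_le hH_le le_sup_right))
    exact hle (inf_le_right.trans ((hH.le_of_le hsupp inf_le_right).trans inf_le_left))
  refine ⟨H, Subgroup.isComplement'_of_disjoint_and_mul_eq_univ ?_ ?_⟩
  · exact disjoint_iff_inf_le.2 ((le_inf inf_le_left hfrat).trans hA.le_bot)
  · rw [← Subgroup.normal_mul, sup_comm, hHA, Subgroup.coe_top]

theorem centralizer_le_self_of_socle_le [Finite G] (hfrat : frattini G = ⊥)
    {S : Subgroup G} [S.Normal] (hS : socle G ≤ S) : Subgroup.centralizer (S : Set G) ≤ S := by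
  have hcomm : IsMulCommutative (Subgroup.centralizer (S : Set G) ⊓ S : Subgroup G) :=
    Subgroup.le_centralizer_iff_isMulCommutative.1
      (inf_le_left.trans (Subgroup.centralizer_le inf_le_right))
  obtain ⟨H, hH⟩ := exists_isComplement'_of_disjoint_frattini
    (A := Subgroup.centralizer (S : Set G) ⊓ S) (hfrat ▸ disjoint_bot_right)
  have hnormal : (Subgroup.centralizer (S : Set G) ⊓ H).Normal :=
    inf_normal_of_sup_eq_top ((sup_comm H _).trans hH.sup_eq_top)
      (inf_le_right.trans (Subgroup.le_centralizer_iff.1 inf_le_left))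
  have hbot : Subgroup.centralizer (S : Set G) ⊓ H = ⊥ := by
    by_contra hne
    obtain ⟨N, hNle, hN⟩ := exists_isMinimalNormal_le hne
    exact hN.2.1 (le_bot_iff.1 (hH.disjoint
      (le_inf (hNle.trans inf_le_left) (hN.le_socle.trans hS)) (hNle.trans inf_le_right)))
  calc Subgroup.centralizer (S : Set G)
    _ = (Subgroup.centralizer (S : Set G) ⊓ S ⊔ H) ⊓ Subgroup.centralizer (S : Set G) := by
      rw [hH.sup_eq_top, top_inf_eq]
    _ = Subgroup.centralizer (S : Set G) ⊓ S ⊔ H ⊓ Subgroup.centralizer (S : Set G) :=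
      sup_inf_assoc_of_le_of_normal H inf_le_left
    _ = Subgroup.centralizer (S : Set G) ⊓ S := by
      rw [inf_comm H, hbot, sup_bot_eq]
    _ ≤ S := inf_le_right

/-! ### Self-centralizing chief factors -/

theorem IsChiefFactorPair.sup_eq {I M D : Subgroup G} (h : IsChiefFactorPair G I M)
    [hD : D.Normal] (hDI : D ≤ I) (hDM : ¬ D ≤ M) : D ⊔ M = I := by
  obtain ⟨-, hM, hlt, hmax⟩ := h
  exact (hmax (D ⊔ M) inferInstance le_sup_right (sup_le hDI hlt.le)).resolve_left
    fun heq => hDM (heq ▸ le_sup_left)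

theorem IsChiefFactorPair.inf_le_or_le {I M D T : Subgroup G} (h : IsChiefFactorPair G I M)
    [D.Normal] [T.Normal] (hDI : D ≤ I) (hT : D ⊓ M ≤ T) : T ⊓ D ≤ M ∨ D ≤ T := by
  refine or_iff_not_imp_left.2 fun hTD => ?_
  calc D = (T ⊓ D ⊔ M) ⊓ D := by
        rw [h.sup_eq (inf_le_right.trans hDI) hTD, inf_eq_right.2 hDI]
    _ = T ⊓ D ⊔ M ⊓ D := sup_inf_assoc_of_le_of_normal M inf_le_right
    _ ≤ T := sup_le inf_le_left (inf_comm D M ▸ hT)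

theorem IsChiefFactorPair.sup_inf {I M D U : Subgroup G} (h : IsChiefFactorPair G I M)
    [D.Normal] [U.Normal] (hUD : U ⊔ D = I) (hne : U ⊔ D ⊓ M ≠ I) :
    IsChiefFactorPair G I (U ⊔ D ⊓ M) := by
  have hM := h.2.1
  refine ⟨h.1, inferInstance, lt_of_le_of_ne ?_ hne, fun T hT hUT hTI => ?_⟩
  · exact hUD ▸ sup_le_sup_left inf_le_left U
  · rcases h.inf_le_or_le (hUD ▸ le_sup_right) (le_sup_right.trans hUT) with hTD | hDT
    · refine Or.inl (le_antisymm ?_ hUT)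
      calc T = (U ⊔ D) ⊓ T := by rw [hUD, inf_eq_right.2 hTI]
        _ = U ⊔ D ⊓ T := sup_inf_assoc_of_le_of_normal D (le_sup_left.trans hUT)
        _ ≤ U ⊔ D ⊓ M := sup_le_sup_left (le_inf inf_le_left (inf_comm D T ▸ hTD)) U
    · exact Or.inr (le_antisymm hTI (hUD ▸ sup_le (le_sup_left.trans hUT) hDT))

/-- The chief factor `I / M` of `G` contains its own centralizer in `G`. Since `x` centralizes
`I / M` exactly when `[x, I] ≤ M`, the inclusion `C_G(I / M) ≤ I` is expressed through
commutators of subgroups, without reference to the quotient. -/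
def IsSelfCentralizingFactor (I M : Subgroup G) : Prop :=
  IsChiefFactorPair G I M ∧ ∀ E : Subgroup G, ⁅E, I⁆ ≤ M → E ≤ I

theorem IsSelfCentralizingFactor.sup_inf {I M D U : Subgroup G}
    (h : IsSelfCentralizingFactor I M) [D.Normal] [U.Normal] (hDM : D ⊔ M = I)
    (hUD : U ⊔ D = I) (hne : U ⊔ D ⊓ M ≠ I) : IsSelfCentralizingFactor I (U ⊔ D ⊓ M) := by
  have hM := h.1.2.1
  have hDI : D ≤ I := hUD ▸ le_sup_right
  refine ⟨h.1.sup_inf hUD hne, fun E hE => h.2 E ?_⟩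
  have hinf : (U ⊔ D ⊓ M) ⊓ D ≤ M := (h.1.inf_le_or_le hDI le_sup_right).resolve_right
    fun hD => hne (le_antisymm (hUD ▸ sup_le_sup_left inf_le_left U)
      (hUD ▸ sup_le le_sup_left hD))
  rw [← hDM]
  refine commutator_sup_le ?_ (Subgroup.commutator_le_right E M)
  exact (le_inf ((Subgroup.commutator_mono le_rfl hDI).trans hE)
    (Subgroup.commutator_le_right E D)).trans hinf

theorem IsSelfCentralizingFactor.exists_isMinimalNormal_sup_centralizer_lt [Finite G]
    {I M : Subgroup G} (h : IsSelfCentralizingFactor I M)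
    (hC : Subgroup.centralizer (socle G : Set G) ≤ socle G) (hM : socle G ≤ M) :
    ∃ N, IsMinimalNormal G N ∧ N ⊔ Subgroup.centralizer (N : Set G) < I := by
  have hIn := h.1.1
  have hMn := h.1.2.1
  have hMI := h.1.2.2.1
  obtain ⟨D, -, hD⟩ := (Set.toFinite
    {D : Subgroup G | D.Normal ∧ D ≤ I ∧ ¬ D ≤ M}).exists_le_minimal
    (show I ∈ _ from ⟨hIn, le_rfl, hMI.not_ge⟩)
  obtain ⟨hDn, hDI, hDM⟩ := hD.prop
  obtain ⟨N, hN, hDN⟩ : ∃ N, IsMinimalNormal G N ∧ ¬ D ≤ Subgroup.centralizer (N : Set G) := by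
    by_contra! hall
    have hcent : D ≤ Subgroup.centralizer (socle G : Set G) := Subgroup.le_centralizer_iff.1
      (sSup_le fun N hN => Subgroup.le_centralizer_iff.1 (hall N hN))
    exact hDM (hcent.trans (hC.trans hM))
  have hNn := hN.1
  have hNM : N ≤ M := hN.le_socle.trans hM
  set E := Subgroup.centralizer (N : Set G)
  have hED : E ⊓ D ≤ M := by
    by_contra hle
    exact hDN ((hD.le_of_le ⟨inferInstance, inf_le_right.trans hDI, hle⟩ inf_le_right).trans
      inf_le_left)
  have hEI : E ≤ I := by
    refine h.2 E (h.1.sup_eq hDI hDM ▸ commutator_sup_le ?_ (Subgroup.commutator_le_right E M))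
    exact (Subgroup.commutator_le_inf E D).trans hED
  refine ⟨N, hN, lt_of_le_of_ne (sup_le (hNM.trans hMI.le) hEI) fun hNE => ?_⟩
  rcases hN.le_or_disjoint D with hND | hND
  · refine hDM ?_
    calc D = (N ⊔ E) ⊓ D := by rw [hNE, inf_eq_right.2 hDI]
      _ = N ⊔ E ⊓ D := sup_inf_assoc_of_le_of_normal E hND
      _ ≤ M := sup_le hNM hED
  · exact hDN (le_centralizer_of_disjoint hND.symm)

theorem sup_sInf_eq_of_isSelfCentralizingFactor [Finite G] {I U : Subgroup G} [U.Normal]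
    {𝓜 : Set (Subgroup G)} (hUI : U ≤ I) (hne : 𝓜.Nonempty)
    (h𝓜 : ∀ M ∈ 𝓜, IsSelfCentralizingFactor I M)
    (hU : ∀ M, IsSelfCentralizingFactor I M → ¬ U ≤ M) : U ⊔ sInf 𝓜 = I := by
  obtain ⟨M₀, hM₀⟩ := hne
  have hIn := (h𝓜 M₀ hM₀).1.1
  have hle : sInf 𝓜 ≤ I := (sInf_le hM₀).trans (h𝓜 M₀ hM₀).1.2.2.1.le
  obtain ⟨D, -, hD⟩ := (Set.toFinite
    {D : Subgroup G | D.Normal ∧ sInf 𝓜 ≤ D ∧ D ≤ I ∧ U ⊔ D = I}).exists_le_minimal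
    (show I ∈ _ from ⟨hIn, hle, le_rfl, sup_eq_right.2 hUI⟩)
  obtain ⟨hDn, h𝓜D, hDI, hUD⟩ := hD.prop
  suffices hD𝓜 : D ≤ sInf 𝓜 by rw [le_antisymm h𝓜D hD𝓜, hUD]
  refine le_sInf fun M hM => ?_
  by_contra hDM
  have hMn := (h𝓜 M hM).1.2.1
  have hUDM : U ⊔ D ⊓ M ≠ I := fun heq => hDM ((hD.le_of_le
    ⟨inferInstance, le_inf h𝓜D (sInf_le hM), inf_le_left.trans hDI, heq⟩ inf_le_left).trans
    inf_le_right)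
  exact hU _ ((h𝓜 M hM).sup_inf ((h𝓜 M hM).1.sup_eq hDI hDM) hUD hUDM) le_sup_left

/-! ### The socle of a quotient -/

theorem socle_le_comap_socle {Q : Type*} [Group Q] {f : G →* Q} (hf : Function.Surjective f) :
    socle G ≤ (socle Q).comap f := by
  refine sSup_le fun N hN => Subgroup.map_le_iff_le_comap.1 ?_
  by_cases hbot : N.map f = ⊥
  · exact hbot ▸ bot_le
  refine le_sSup ⟨hN.1.map f hf, hbot, fun T hT hTne hTN => le_antisymm hTN ?_⟩
  refine Subgroup.map_le_iff_le_comap.2 ((hN.le_or_disjoint (T.comap f)).resolve_right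
    fun hdisj => hTne ?_)
  refine (Subgroup.eq_bot_iff_forall T).2 fun t ht => ?_
  obtain ⟨n, hn, rfl⟩ := hTN ht
  rw [Subgroup.disjoint_def.1 hdisj hn ht, map_one]

theorem comap_socle_eq {Q : Type*} [Group Q] {f : G →* Q} (hf : Function.Surjective f)
    {I : Subgroup G} [hI : I.Normal] (hker : f.ker ≤ I) (hle : I ≤ (socle Q).comap f)
    (hcent : ∀ E : Subgroup G, ⁅E, I⁆ ≤ f.ker → E ≤ I) : (socle Q).comap f = I := by
  have hIn := hI.map f hf
  suffices hmap : socle Q ≤ I.map f from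
    le_antisymm ((Subgroup.comap_mono hmap).trans (Subgroup.comap_map_eq_self hker).le) hle
  refine sSup_le fun T hT => (hT.le_or_disjoint (I.map f)).elim id fun hdisj => ?_
  have hTn := hT.1
  rw [← Subgroup.map_comap_eq_self_of_surjective hf T]
  refine Subgroup.map_mono (hcent _ ?_)
  rw [← Subgroup.map_eq_bot_iff, Subgroup.map_commutator,
    Subgroup.map_comap_eq_self_of_surjective hf]
  exact Subgroup.commutator_eq_bot_of_disjoint hdisj

/-! ### `G`-groups and their equivalence -/

section GGroups

variable {V V₁ V₂ : Type*} [Group V] [Group V₁] [Group V₂]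
  {a : G →* MulAut V} {a₁ : G →* MulAut V₁} {a₂ : G →* MulAut V₂}

theorem GIso.symm (h : GIso G a₁ a₂) : GIso G a₂ a₁ := by
  obtain ⟨φ, hφ⟩ := h
  exact ⟨φ.symm, fun g v => φ.injective (by simp [hφ])⟩

theorem GIso.gEquiv (h : GIso G a₁ a₂) : GEquiv G a₁ a₂ := by
  obtain ⟨φ, hφ⟩ := h
  exact ⟨φ, SemidirectProduct.congr φ (MulEquiv.refl G) fun g => MulEquiv.ext fun v => hφ g v,
    fun v => by ext <;> simp, fun x => by simp⟩

theorem GEquiv.exists_twist (h : GEquiv G a₁ a₂) :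
    ∃ (φ : V₁ ≃* V₂) (β : G → V₂), ∀ g v, φ (a₁ g v) = β g * a₂ g (φ v) * (β g)⁻¹ := by
  obtain ⟨φ, Φ, hΦ_inl, hΦ_right⟩ := h
  refine ⟨φ, fun g => (Φ (SemidirectProduct.inr g)).left, fun g v => ?_⟩
  have hcomm : (SemidirectProduct.inl (a₁ g v) : V₁ ⋊[a₁] G) * SemidirectProduct.inr g =
      SemidirectProduct.inr g * SemidirectProduct.inl v := by
    ext <;> simp
  have hleft := congrArg (fun x => (Φ x).left) hcomm
  simp only [map_mul, hΦ_inl, SemidirectProduct.mul_left, SemidirectProduct.left_inl,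
    SemidirectProduct.right_inl, map_one, MulAut.one_apply, hΦ_right,
    SemidirectProduct.right_inr] at hleft
  exact eq_mul_inv_of_mul_eq hleft

/-- The elements of `G` inducing an inner automorphism on the `G`-group `(V, a)`. For a chief
factor `V = N` this is `N C_G(N)`. -/
def innerSubgroup (a : G →* MulAut V) : Subgroup G :=
  (MulAut.conj : V →* MulAut V).range.comap a

theorem mem_innerSubgroup {g : G} : g ∈ innerSubgroup a ↔ ∃ w : V, ∀ v, a g v = w * v * w⁻¹ := by
  simp only [innerSubgroup, Subgroup.mem_comap, MonoidHom.mem_range, DFunLike.ext_iff,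
    MulAut.conj_apply, eq_comm]

theorem ker_le_innerSubgroup : a.ker ≤ innerSubgroup a :=
  fun _ hg => Subgroup.mem_comap.2 ((MonoidHom.mem_ker.1 hg).symm ▸ one_mem _)

theorem GEquiv.innerSubgroup_le (h : GEquiv G a₁ a₂) : innerSubgroup a₁ ≤ innerSubgroup a₂ := by
  obtain ⟨φ, β, hφ⟩ := h.exists_twist
  intro g hg
  obtain ⟨w, hw⟩ := mem_innerSubgroup.1 hg
  refine mem_innerSubgroup.2 ⟨(β g)⁻¹ * φ w, φ.surjective.forall.2 fun v => ?_⟩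
  calc a₂ g (φ v) = (β g)⁻¹ * φ (a₁ g v) * β g := by rw [hφ]; group
    _ = (β g)⁻¹ * φ w * φ v * ((β g)⁻¹ * φ w)⁻¹ := by
      rw [hw, map_mul, map_mul, map_inv]; group

theorem GEquiv.isIrreducibleGGroup (h : GEquiv G a₁ a₂) (h₂ : IsIrreducibleGGroup G a₂) :
    IsIrreducibleGGroup G a₁ := by
  obtain ⟨φ, β, hφ⟩ := h.exists_twist
  have := h₂.1
  refine ⟨φ.toEquiv.nontrivial, fun W hW hinv => ?_⟩
  have hmap : W.map φ.toMonoidHom = ⊥ ∨ W.map φ.toMonoidHom = ⊤ := by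
    have hWφ := hW.map φ.toMonoidHom φ.surjective
    refine h₂.2 _ hWφ ?_
    rintro g _ ⟨v, hv, rfl⟩
    have htwist : a₂ g (φ v) = (β g)⁻¹ * φ (a₁ g v) * (β g)⁻¹⁻¹ := by rw [hφ]; group
    exact htwist ▸ hWφ.conj_mem _ (Subgroup.mem_map_of_mem _ (hinv g v hv)) _
  refine hmap.imp (fun hbot => (Subgroup.map_eq_bot_iff_of_injective W φ.injective).1 hbot)
    fun htop => ?_
  exact Subgroup.map_injective φ.injective
    (htop.trans (Subgroup.map_top_of_surjective _ φ.surjective).symm)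

theorem RepresentsFactor.isChiefFactorPair {X Y : Subgroup G} [hX : X.Normal] [hY : Y.Normal]
    (h : RepresentsFactor G a X Y) (ha : IsIrreducibleGGroup G a) (hYX : Y ≤ X) :
    IsChiefFactorPair G X Y := by
  obtain ⟨f, hf, hker, hequiv⟩ := h
  have := ha.1
  refine ⟨hX, hY, lt_of_le_of_ne hYX ?_, fun T hT hYT hTX => ?_⟩
  · rintro rfl
    obtain ⟨v, hv⟩ := exists_ne (1 : V)
    obtain ⟨x, rfl⟩ := hf v
    exact hv ((hker x).2 x.2)
  have hW : ((T.subgroupOf X).map f).Normal := (hT.subgroupOf X).map f hf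
  have hinv (g : G) (v : V) (hv : v ∈ (T.subgroupOf X).map f) :
      a g v ∈ (T.subgroupOf X).map f := by
    obtain ⟨t, ht, rfl⟩ := hv
    rw [← hequiv g t ⟨g * t * g⁻¹, hX.conj_mem _ t.2 g⟩ rfl]
    exact Subgroup.mem_map_of_mem f (hT.conj_mem _ ht g)
  rcases ha.2 _ hW hinv with hbot | htop
  · refine Or.inl (le_antisymm (fun t ht => (hker ⟨t, hTX ht⟩).1 ?_) hYT)
    exact Subgroup.mem_bot.1 (hbot ▸ Subgroup.mem_map_of_mem f ht)
  · refine Or.inr (le_antisymm hTX fun x hx => ?_)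
    obtain ⟨t, ht, htx⟩ : f ⟨x, hx⟩ ∈ (T.subgroupOf X).map f := htop ▸ Subgroup.mem_top _
    have hmem : ((t⁻¹ * ⟨x, hx⟩ : X) : G) ∈ Y :=
      (hker _).1 (by rw [map_mul, map_inv, htx, inv_mul_cancel])
    exact (T.mul_mem_cancel_left (T.inv_mem ht)).1 (hYT hmem)

end GGroups

section Conjugation

variable (N : Subgroup G) [N.Normal]

theorem representsFactor_conjNormal :
    RepresentsFactor G (MulAut.conjNormal : G →* MulAut N) N ⊥ :=
  ⟨MonoidHom.id N, Function.surjective_id, fun _ => by simp,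
    fun g x y hxy => Subtype.ext (hxy.trans (MulAut.conjNormal_apply g x).symm)⟩

theorem ker_conjNormal :
    (MulAut.conjNormal : G →* MulAut N).ker = Subgroup.centralizer (N : Set G) := by
  ext g
  simp only [MonoidHom.mem_ker, DFunLike.ext_iff, MulAut.one_apply, Subtype.ext_iff,
    MulAut.conjNormal_apply, mul_inv_eq_iff_eq_mul, Subtype.forall]
  exact forall₂_congr fun _ _ => eq_comm

theorem innerSubgroup_conjNormal :
    innerSubgroup (MulAut.conjNormal : G →* MulAut N) =
      N ⊔ Subgroup.centralizer (N : Set G) := by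
  refine le_antisymm (fun g hg => ?_) (sup_le (fun n hn => ?_) ?_)
  · obtain ⟨n, hn⟩ := mem_innerSubgroup.1 hg
    have hker : (n : G)⁻¹ * g ∈ Subgroup.centralizer (N : Set G) := by
      rw [← ker_conjNormal, MonoidHom.mem_ker]
      ext v
      simp [hn, mul_assoc]
    simpa using Subgroup.mul_mem_sup n.2 hker
  · exact mem_innerSubgroup.2 ⟨⟨n, hn⟩, fun v => by ext; simp⟩
  · rw [← ker_conjNormal]
    exact ker_le_innerSubgroup

end Conjugation

section SocleAction

variable {Q : Type*} [Group Q] (f : G →* Q)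

theorem representsFactor_socAct (hf : Function.Surjective f) :
    RepresentsFactor G (socAct G f) ((socle Q).comap f) f.ker := by
  refine ⟨f.subgroupComap (socle Q), f.subgroupComap_surjective_of_surjective _ hf,
    fun x => Subtype.ext_iff, fun g x y hxy => Subtype.ext ?_⟩
  calc f y = f g * f x * (f g)⁻¹ := by rw [hxy, map_mul, map_mul, map_inv]
    _ = socAct G f g (f.subgroupComap (socle Q) x) :=
      (MulAut.conjNormal_apply (f g) (f.subgroupComap (socle Q) x)).symm

theorem comap_socle_le_innerSubgroup : (socle Q).comap f ≤ innerSubgroup (socAct G f) :=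
  fun g hg => mem_innerSubgroup.2 ⟨⟨f g, hg⟩, fun v => Subtype.ext (by simp [socAct])⟩

theorem le_innerSubgroup_socAct (hf : Function.Surjective f) {E : Subgroup G}
    (hE : ⁅E, (socle Q).comap f⁆ ≤ f.ker) : E ≤ innerSubgroup (socAct G f) := by
  have hcent : E.map f ≤ Subgroup.centralizer (socle Q : Set Q) := by
    rw [← Subgroup.commutator_eq_bot_iff_le_centralizer,
      ← Subgroup.map_comap_eq_self_of_surjective hf (socle Q), ← Subgroup.map_commutator,
      Subgroup.map_eq_bot_iff]
    exact hE
  rw [← ker_conjNormal, Subgroup.map_le_iff_le_comap, MonoidHom.comap_ker] at hcent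
  exact hcent.trans ker_le_innerSubgroup

end SocleAction

/-! ### The crown normals of a minimal normal subgroup -/

section CrownNormals

variable {N : Subgroup G} [N.Normal]

theorem IsMinimalNormal.isIrreducibleGGroup (hN : IsMinimalNormal G N) :
    IsIrreducibleGGroup G (MulAut.conjNormal : G →* MulAut N) := by
  refine ⟨(Subgroup.nontrivial_iff_ne_bot N).2 hN.2.1, fun W _ hinv => ?_⟩
  have hW : (W.map N.subtype).Normal := by
    refine ⟨?_⟩
    rintro _ ⟨w, hw, rfl⟩ g
    exact ⟨_, hinv g w hw, MulAut.conjNormal_apply g w⟩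
  refine or_iff_not_imp_left.2 fun hne => ?_
  have heq := hN.2.2 _ hW ((Subgroup.map_eq_bot_iff_of_injective W N.subtype_injective).not.2 hne)
    (Subgroup.map_subtype_le W)
  exact Subgroup.map_injective N.subtype_injective
    (heq.trans ((MonoidHom.range_eq_map N.subtype).symm.trans N.range_subtype).symm)

theorem gIso_conjNormal_socAct {Q : Type*} [Group Q] {f : G →* Q} (hf : Function.Surjective f)
    (hN : IsMinimalNormal G N) (hdisj : Disjoint N f.ker)
    (hsup : N ⊔ f.ker = N ⊔ Subgroup.centralizer (N : Set G)) :
    GIso G (MulAut.conjNormal : G →* MulAut N) (socAct G f) := by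
  have hle : N ⊔ f.ker ≤ (socle Q).comap f :=
    sup_le (hN.le_socle.trans (socle_le_comap_socle hf)) (f.ker_le_comap _)
  have hsoc : (socle Q).comap f = N ⊔ f.ker := by
    refine comap_socle_eq hf le_sup_right hle fun E hE => hsup ▸ le_sup_of_le_right ?_
    have hker : ⁅E, N⁆ ≤ f.ker := (Subgroup.commutator_mono le_rfl le_sup_left).trans hE
    exact Subgroup.commutator_eq_bot_iff_le_centralizer.1
      (le_bot_iff.1 (hdisj (Subgroup.commutator_le_right E N) hker))
  let φ : N →* socle Q :=
    (f.comp N.subtype).codRestrict (socle Q) fun n => hle (Subgroup.mem_sup_left n.2)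
  have hφ_apply (n : N) : (φ n : Q) = f n := rfl
  have hφ : Function.Bijective φ := by
    refine ⟨(injective_iff_map_eq_one φ).2 fun n hn => ?_, fun ⟨y, hy⟩ => ?_⟩
    · exact Subtype.ext (Subgroup.disjoint_def.1 hdisj n.2 (congrArg Subtype.val hn))
    · obtain ⟨x, rfl⟩ := hf y
      obtain ⟨n, hn, k, hk, rfl⟩ :=
        Subgroup.mem_sup_of_normal_right.1 (hsoc.le (Subgroup.mem_comap.2 hy))
      exact ⟨⟨n, hn⟩, Subtype.ext (by simp [hφ_apply, MonoidHom.mem_ker.1 hk])⟩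
  exact ⟨MulEquiv.ofBijective φ hφ, fun g n => Subtype.ext (by simp [hφ_apply, socAct])⟩

theorem exists_surjective_semidirectProduct_kerLift [IsMulCommutative N] {H : Subgroup G}
    (hH : N.IsComplement' H) :
    ∃ F : G →* N ⋊[QuotientGroup.kerLift (MulAut.conjNormal : G →* MulAut N)]
        (G ⧸ (MulAut.conjNormal : G →* MulAut N).ker),
      Function.Surjective F ∧ F.ker = H ⊓ Subgroup.centralizer (N : Set G) := by
  let a : G →* MulAut N := MulAut.conjNormal
  let e := SemidirectProduct.mulEquivSubgroup hH
  have he (x) : e x = x.left * x.right := rfl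
  let F : G →* N ⋊[QuotientGroup.kerLift a] (G ⧸ a.ker) :=
    (SemidirectProduct.map (MonoidHom.id N) ((QuotientGroup.mk' a.ker).comp H.subtype)
      fun h => by ext n; simp [a]).comp e.symm.toMonoidHom
  have hF (x) : F (e x) = ⟨x.left, QuotientGroup.mk' a.ker x.right⟩ := by
    simp [F, SemidirectProduct.ext_iff]
  refine ⟨F, fun ⟨n, q⟩ => ?_, Subgroup.ext (e.surjective.forall.2 fun x => ?_)⟩
  · obtain ⟨g, rfl⟩ := QuotientGroup.mk'_surjective a.ker q
    obtain ⟨x, rfl⟩ := e.surjective g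
    have hx : QuotientGroup.mk' a.ker x.left = 1 := (QuotientGroup.eq_one_iff _).2
      (ker_conjNormal N ▸ Subgroup.le_centralizer_iff_isMulCommutative.2 ‹_› x.left.2)
    exact ⟨e ⟨n, x.right⟩, (hF _).trans (SemidirectProduct.ext rfl
      (by rw [he, map_mul, hx, one_mul]))⟩
  · have hxH : (x.left * x.right : G) ∈ H ↔ x.left = 1 := by
      refine (H.mul_mem_cancel_right x.right.2).trans ⟨fun h => ?_, fun h => h ▸ H.one_mem⟩
      exact Subtype.ext (Subgroup.disjoint_def.1 hH.disjoint x.left.2 h)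
    rw [MonoidHom.mem_ker, hF, SemidirectProduct.ext_iff, Subgroup.mem_inf, ← ker_conjNormal, he,
      hxH]
    refine and_congr_right fun (hx : x.left = 1) => ?_
    rw [show (x.left : G) * x.right = x.right by rw [hx, Subgroup.coe_one, one_mul]]
    exact QuotientGroup.eq_one_iff _

theorem IsMinimalNormal.disjoint_centralizer (hN : IsMinimalNormal G N)
    (hab : ¬ IsMulCommutative N) :
    Disjoint N (Subgroup.centralizer (N : Set G)) :=
  (hN.le_or_disjoint _).resolve_left (Subgroup.le_centralizer_iff_isMulCommutative.not.2 hab)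

theorem crownNormals_conjNormal_nonempty [Finite G] (hfrat : frattini G = ⊥)
    (hN : IsMinimalNormal G N) :
    (crownNormals (MulAut.conjNormal : G →* MulAut N)).Nonempty := by
  by_cases hab : IsMulCommutative N
  · obtain ⟨H, hH⟩ := exists_isComplement'_of_disjoint_frattini (A := N)
      (hfrat ▸ disjoint_bot_right)
    obtain ⟨F, hF, hker⟩ := exists_surjective_semidirectProduct_kerLift hH
    refine ⟨F.ker, inferInstance, fun _ => ⟨QuotientGroup.quotientKerEquivOfSurjective F hF⟩,
      fun hne => (hne hab.is_comm.comm).elim, GIso.gEquiv (GIso.symm ?_)⟩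
    refine gIso_conjNormal_socAct (QuotientGroup.mk'_surjective _) hN ?_ ?_
    · rw [QuotientGroup.ker_mk', hker]
      exact hH.disjoint.mono_right inf_le_left
    · have hNC := Subgroup.le_centralizer_iff_isMulCommutative.2 hab
      rw [QuotientGroup.ker_mk', hker, ← sup_inf_assoc_of_le_of_normal H hNC, hH.sup_eq_top,
        top_inf_eq, sup_eq_right.2 hNC]
  · refine ⟨Subgroup.centralizer (N : Set G), inferInstance, fun h => (hab ⟨⟨h⟩⟩).elim,
      fun _ => ⟨QuotientGroup.quotientMulEquivOfEq (ker_conjNormal N).symm⟩, ?_⟩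
    refine (gIso_conjNormal_socAct (QuotientGroup.mk'_surjective _) hN ?_ ?_).symm.gEquiv
    · rw [QuotientGroup.ker_mk']
      exact hN.disjoint_centralizer hab
    · rw [QuotientGroup.ker_mk']

theorem index_of_mem_crownNormals {M : Subgroup G} (hN : IsMinimalNormal G N)
    (hM : M ∈ crownNormals (MulAut.conjNormal : G →* MulAut N)) :
    M.index = Nat.card N * (N ⊔ Subgroup.centralizer (N : Set G)).index := by
  obtain ⟨_, hab, hnab, -⟩ := hM
  rw [Subgroup.index_eq_card]
  by_cases hcomm : IsMulCommutative N
  · obtain ⟨e⟩ := hab hcomm.is_comm.comm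
    rw [Nat.card_congr e.toEquiv, SemidirectProduct.card, ← Subgroup.index_eq_card,
      ker_conjNormal, sup_eq_right.2 (Subgroup.le_centralizer_iff_isMulCommutative.2 hcomm)]
  · obtain ⟨e⟩ := hnab fun h => hcomm ⟨⟨h⟩⟩
    rw [Nat.card_congr e.toEquiv, ← Subgroup.index_eq_card, ker_conjNormal,
      ← Subgroup.relIndex_mul_index (le_sup_right : _ ≤ N ⊔ _), Subgroup.relIndex_sup_right,
      ← Subgroup.inf_relIndex_right, (hN.disjoint_centralizer hcomm).symm.eq_bot,
      Subgroup.relIndex_bot_left]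

theorem card_socle_mul_index_comap {Q : Type*} [Group Q] {f : G →* Q}
    (hf : Function.Surjective f) :
    Nat.card (socle Q) * ((socle Q).comap f).index = f.ker.index := by
  rw [Subgroup.index_comap_of_surjective _ hf, Subgroup.card_mul_index, Subgroup.index_ker,
    MonoidHom.range_eq_top.2 hf, Subgroup.card_top]

theorem comap_socle_eq_of_mem_crownNormals [Finite G] {M : Subgroup G} [M.Normal]
    (hN : IsMinimalNormal G N) (hM : M ∈ crownNormals (MulAut.conjNormal : G →* MulAut N)) :
    (socle (G ⧸ M)).comap (QuotientGroup.mk' M) = N ⊔ Subgroup.centralizer (N : Set G) := by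
  have ⟨_, _, _, hequiv⟩ := hM
  have hle : (socle (G ⧸ M)).comap (QuotientGroup.mk' M) ≤
      N ⊔ Subgroup.centralizer (N : Set G) :=
    (comap_socle_le_innerSubgroup _).trans
      (hequiv.innerSubgroup_le.trans (innerSubgroup_conjNormal N).le)
  have hcard : Nat.card (socle (G ⧸ M)) = Nat.card N := by
    obtain ⟨φ, -⟩ := hequiv
    exact Nat.card_congr φ.toEquiv
  have hindex := (card_socle_mul_index_comap (QuotientGroup.mk'_surjective M)).trans
    ((congrArg Subgroup.index (QuotientGroup.ker_mk' M)).trans (index_of_mem_crownNormals hN hM))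
  rw [hcard] at hindex
  refine eq_of_le_of_not_lt hle fun hlt => (Subgroup.index_strictAnti hlt).ne' ?_
  exact Nat.eq_of_mul_eq_mul_left Nat.card_pos hindex

theorem isSelfCentralizingFactor_of_mem_crownNormals [Finite G] {M : Subgroup G}
    (hN : IsMinimalNormal G N) (hM : M ∈ crownNormals (MulAut.conjNormal : G →* MulAut N)) :
    IsSelfCentralizingFactor (N ⊔ Subgroup.centralizer (N : Set G)) M := by
  have ⟨_, _, _, hequiv⟩ := hM
  have hπ := QuotientGroup.mk'_surjective M
  have hrep := representsFactor_socAct (QuotientGroup.mk' M) hπ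
  have hcent (E : Subgroup G) := le_innerSubgroup_socAct (QuotientGroup.mk' M) hπ (E := E)
  rw [comap_socle_eq_of_mem_crownNormals hN hM, QuotientGroup.ker_mk'] at hrep
  simp only [comap_socle_eq_of_mem_crownNormals hN hM, QuotientGroup.ker_mk'] at hcent
  have hirr := hequiv.isIrreducibleGGroup hN.isIrreducibleGGroup
  refine ⟨hrep.isChiefFactorPair hirr ?_, fun E hE => ?_⟩
  · rw [← comap_socle_eq_of_mem_crownNormals hN hM]
    exact (QuotientGroup.ker_mk' M).symm.le.trans (MonoidHom.ker_le_comap _ _)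
  · rw [← innerSubgroup_conjNormal]
    exact (hcent E hE).trans hequiv.innerSubgroup_le

theorem crownSocle_conjNormal_eq [Finite G] (hN : IsMinimalNormal G N)
    (hne : (crownNormals (MulAut.conjNormal : G →* MulAut N)).Nonempty)
    (hsup : socle G ⊔ crownRadical (MulAut.conjNormal : G →* MulAut N) =
      N ⊔ Subgroup.centralizer (N : Set G)) :
    crownSocle (MulAut.conjNormal : G →* MulAut N) = N ⊔ Subgroup.centralizer (N : Set G) := by
  obtain ⟨M, hM⟩ := hne
  have hπ := QuotientGroup.mk'_surjective (crownRadical (MulAut.conjNormal : G →* MulAut N))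
  refine comap_socle_eq hπ ?_ ?_ fun E hE => ?_
  · rw [← hsup, QuotientGroup.ker_mk']
    exact le_sup_right
  · rw [← hsup]
    refine sup_le (socle_le_comap_socle hπ) ?_
    exact (QuotientGroup.ker_mk' _).symm.le.trans (MonoidHom.ker_le_comap _ _)
  · refine (isSelfCentralizingFactor_of_mem_crownNormals hN hM).2 E (hE.trans ?_)
    rw [QuotientGroup.ker_mk']
    exact sInf_le hM

end CrownNormals

theorem exists_crown_complement_general [Finite G] [Nontrivial G] (hfrat : frattini G = ⊥) :
    ∃ (N : Subgroup G) (_ : N.Normal), IsMinimalNormal G N ∧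
      ∃ U : Subgroup G, U.Normal ∧ U ≠ ⊥ ∧
        crownSocle (MulAut.conjNormal : G →* MulAut N) =
          crownRadical (MulAut.conjNormal : G →* MulAut N) ⊔ U ∧
        crownRadical (MulAut.conjNormal : G →* MulAut N) ⊓ U = ⊥ := by
  obtain ⟨N, hN, hmin⟩ := (Set.toFinite {N | IsMinimalNormal G N}).exists_minimalFor
    (fun N => N ⊔ Subgroup.centralizer (N : Set G)) _
    ((exists_isMinimalNormal_le top_ne_bot).imp fun _ h => h.2)
  have := hN.1
  set I := N ⊔ Subgroup.centralizer (N : Set G)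
  let a : G →* MulAut N := MulAut.conjNormal
  have hself (M) (hM : M ∈ crownNormals a) : IsSelfCentralizingFactor I M :=
    isSelfCentralizingFactor_of_mem_crownNormals hN hM
  obtain ⟨M, hM⟩ := crownNormals_conjNormal_nonempty hfrat hN
  have hsocle : socle G ⊔ crownRadical a = I := by
    refine sup_sInf_eq_of_isSelfCentralizingFactor (socle_le_sup_centralizer N) ⟨M, hM⟩ hself
      fun L hL hle => ?_
    obtain ⟨K, hK, hlt⟩ := hL.exists_isMinimalNormal_sup_centralizer_lt
      (centralizer_le_self_of_socle_le hfrat le_rfl) hle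
    exact hlt.not_ge (hmin hK hlt.le)
  obtain ⟨U, hUn, hUS, hUR, hSU⟩ := exists_normal_disjoint_socle_le_sup (crownRadical a)
  have hsup : crownRadical a ⊔ U = I := by
    rw [← hsocle, sup_comm]
    exact le_antisymm (sup_le_sup_right hUS _) (sup_le hSU le_sup_right)
  refine ⟨N, hN.1, hN, U, hUn, ?_,
    (crownSocle_conjNormal_eq hN ⟨M, hM⟩ hsocle).trans hsup.symm, hUR.symm.eq_bot⟩
  rintro rfl
  exact (sInf_le hM).not_gt ((hself M hM).1.2.2.1.trans_eq (hsup.symm.trans (sup_bot_eq _)))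

/-- **Lemma 2.1** ([classes, Lemma 1.3.6]): a nontrivial finite group `G` with trivial
Frattini subgroup has a chief factor `V` and a nontrivial normal subgroup `U` with
`I_G(V) = R_G(V) × U`. -/
theorem exists_crown_complement (G : Type) [Group G] [Finite G] [Nontrivial G]
    (hfrat : frattini G = ⊥) :
    ∃ (V : Type) (_ : Group V) (a : G →* MulAut V) (X Y : Subgroup G),
      IsChiefFactorPair G X Y ∧ RepresentsFactor G a X Y ∧
      ∃ U : Subgroup G, U.Normal ∧ U ≠ ⊥ ∧
        crownSocle a = crownRadical a ⊔ U ∧ crownRadical a ⊓ U = ⊥ := by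
  obtain ⟨N, _, hN, hU⟩ := exists_crown_complement_general hfrat
  have hrep := representsFactor_conjNormal N
  exact ⟨N, inferInstance, _, N, ⊥,
    hrep.isChiefFactorPair hN.isIrreducibleGGroup bot_le, hrep, hU⟩

end ChebotarevPaper
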